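/- Given a rooted tree T with n nodes and a real value p > 1, there exists a set P of at most 2p nodes such that every connected component of T with the nodes of P removed contains fewer than n/p nodes, and each such component is adjacent (in T) to at most two nodes of P. -/

import Mathlib

/-!
Root every tree of the forest and mark vertices from the leaves up. The part hanging at `v` is what
is left of the subtree of `v` after discarding the subtrees of the marked vertices below `v`. Mark
`v` if this part has at least `n / p` vertices (`v` is *heavy*), or if at least two marked vertices
lie just below it (`v` is *branching*).

The parts hanging at the marked vertices are pairwise disjoint, so at most `p` vertices are heavy.
The sets of marked vertices just below these parts are pairwise disjoint as well, and each branching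
vertex owns at least two marked vertices; hence at most half of the marked vertices fail to be
heavy, and at most `2 * p` vertices are marked.

A component of the complement lies in the part hanging at its topmost vertex `v`. As `v` is not
marked, this part is small, and the marked neighbours of the component are at most one vertex just
below the part and possibly the parent of `v`.
-/

open Function Relation

theorem ncard_mul_le_ncard_of_pairwiseDisjoint {ι α : Type*} {s : ι → Set α} {t : Set ι}
    {u : Set α} {k : ℕ} (ht : t.Finite) (hu : u.Finite) (hd : t.PairwiseDisjoint s)
    (hsu : ∀ i ∈ t, s i ⊆ u) (hk : ∀ i ∈ t, k ≤ (s i).ncard) : t.ncard * k ≤ u.ncard := by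
  calc t.ncard * k ≤ ∑ i ∈ ht.toFinset, (s i).ncard := by
        rw [Set.ncard_eq_toFinset_card t ht, ← smul_eq_mul]
        exact Finset.card_nsmul_le_sum _ _ _ fun i hi => hk i (ht.mem_toFinset.1 hi)
    _ = (⋃ i ∈ t, s i).ncard := by
        rw [ht.ncard_biUnion (fun i hi => hu.subset (hsu i hi)) hd,
          finsum_mem_eq_finite_toFinset_sum]
    _ ≤ u.ncard := Set.ncard_le_ncard (Set.iUnion₂_subset hsu) hu

theorem wellFounded_swap_of_finite {α : Type*} [Finite α] {r : α → α → Prop}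
    (hr : WellFounded r) : WellFounded (swap r) := by
  have : Std.Irrefl (TransGen (swap r)) :=
    ⟨fun a ha => hr.transGen.irrefl.irrefl a (transGen_swap.1 ha)⟩
  exact Subrelation.wf TransGen.single (Finite.wellFounded_of_trans_of_irrefl (TransGen (swap r)))

theorem exists_set_mem_iff_of_wellFounded {α : Type*} {r : α → α → Prop} (hr : WellFounded r)
    (F : Set α → α → Prop) (hF : ∀ P v, F P v ↔ F (P ∩ {u | r u v}) v) :
    ∃ P : Set α, ∀ v, v ∈ P ↔ F P v := by
  let mark : α → Prop := hr.fix fun v ih => F {u | ∃ h : r u v, ih u h} v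
  refine ⟨{v | mark v}, fun v => ?_⟩
  have hmark : mark v = F {u | ∃ _ : r u v, mark u} v := hr.fix_eq _ v
  have hinter : {u | ∃ _ : r u v, mark u} = {u | mark u} ∩ {u | r u v} := by
    ext u; simp [and_comm]
  rw [hF, ← hinter, ← hmark, Set.mem_ofPred_eq]

section Hanging

variable {V : Type*} {K : V → V → Prop} {P : Set V} {u v w x : V}

/-- The part hanging at `v` after deletion of `P`, where `K a c` means that `a` is the parent of
`c`: the vertices reached by descending from `v` through vertices outside `P`. The vertex `v`
itself always belongs to it, even if `v ∈ P`. -/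
def hanging (K : V → V → Prop) (P : Set V) (v : V) : Set V :=
  {u | ReflTransGen (fun a c => K a c ∧ c ∉ P) v u}

/-- The vertices of `P` just below the part hanging at `v`, that is, the nearest proper
descendants of `v` in `P`. -/
def lowerBoundary (K : V → V → Prop) (P : Set V) (v : V) : Set V :=
  {x | x ∈ P ∧ ∃ u ∈ hanging K P v, K u x}

theorem self_mem_hanging : v ∈ hanging K P v :=
  ReflTransGen.refl

theorem child_mem_hanging (hu : u ∈ hanging K P v) (huw : K u w) (hw : w ∉ P) :
    w ∈ hanging K P v :=
  ReflTransGen.tail hu ⟨huw, hw⟩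

theorem eq_or_notMem_of_mem_hanging (hu : u ∈ hanging K P v) : u = v ∨ u ∉ P :=
  (ReflTransGen.cases_tail hu).imp_right fun ⟨_, _, _, huP⟩ => huP

theorem eq_or_parent_mem_hanging (hK : Relator.LeftUnique K) (hu : u ∈ hanging K P v)
    (hwu : K w u) : u = v ∨ w ∈ hanging K P v := by
  rcases ReflTransGen.cases_tail hu with rfl | ⟨w', hw', hw'u, -⟩
  · exact Or.inl rfl
  · exact Or.inr (hK hwu hw'u ▸ hw')

theorem pairwiseDisjoint_hanging (hK : Relator.LeftUnique K) :
    P.PairwiseDisjoint (hanging K P) := by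
  intro v hv v' hv' hne
  refine Set.disjoint_left.2 fun u hu hu' => hne ?_
  induction hu with
  | refl => exact (eq_or_notMem_of_mem_hanging hu').resolve_right (not_not_intro hv)
  | tail _ hwu ih =>
    rcases eq_or_parent_mem_hanging hK hu' hwu.1 with rfl | hw'
    · exact absurd hv' hwu.2
    · exact ih hw'

theorem pairwiseDisjoint_lowerBoundary (hK : Relator.LeftUnique K) :
    P.PairwiseDisjoint (lowerBoundary K P) := by
  intro v hv v' hv' hne
  refine Set.disjoint_left.2 ?_
  rintro x ⟨-, u, hu, hux⟩ ⟨-, u', hu', hu'x⟩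
  obtain rfl := hK hux hu'x
  exact Set.disjoint_left.1 (pairwiseDisjoint_hanging hK hv hv' hne) hu hu'

theorem transGen_of_mem_hanging (hu : u ∈ hanging K P v) (hux : K u x) : TransGen K v x :=
  TransGen.tail' (ReflTransGen.mono (fun _ _ h => h.1) v u hu) hux

theorem hanging_anti {Q : Set V} (hPQ : P ⊆ Q) : hanging K Q v ⊆ hanging K P v :=
  ReflTransGen.mono (fun _ _ h => ⟨h.1, fun hc => h.2 (hPQ hc)⟩) v

theorem hanging_inter_descendants :
    hanging K (P ∩ {u | TransGen K v u}) v = hanging K P v := by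
  refine Set.Subset.antisymm (fun u hu => ?_) (hanging_anti Set.inter_subset_left)
  induction hu with
  | refl => exact self_mem_hanging
  | tail _ hwu ih =>
    exact child_mem_hanging ih hwu.1 fun huP => hwu.2 ⟨huP, transGen_of_mem_hanging ih hwu.1⟩

theorem lowerBoundary_inter_descendants :
    lowerBoundary K (P ∩ {u | TransGen K v u}) v = lowerBoundary K P v := by
  ext x
  simp only [lowerBoundary, hanging_inter_descendants, Set.mem_ofPred_eq, Set.mem_inter_iff]
  exact ⟨fun ⟨hx, hux⟩ => ⟨hx.1, hux⟩,
    fun ⟨hx, u, hu, hux⟩ => ⟨⟨hx, transGen_of_mem_hanging hu hux⟩, u, hu, hux⟩⟩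

theorem exists_set_mem_iff_heavy_or_branching (hwf : WellFounded (swap K)) (k : ℕ) :
    ∃ P : Set V, ∀ v, v ∈ P ↔
      k ≤ (hanging K P v).ncard ∨ 2 ≤ (lowerBoundary K P v).ncard := by
  refine exists_set_mem_iff_of_wellFounded hwf.transGen
    (fun P v => k ≤ (hanging K P v).ncard ∨ 2 ≤ (lowerBoundary K P v).ncard) fun P v => ?_
  simp only [transGen_swap, hanging_inter_descendants, lowerBoundary_inter_descendants]

theorem ncard_mul_le_of_heavy_or_branching [Finite V] (hK : Relator.LeftUnique K) {k : ℕ}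
    (hP : ∀ v ∈ P, k ≤ (hanging K P v).ncard ∨ 2 ≤ (lowerBoundary K P v).ncard) :
    P.ncard * k ≤ 2 * Nat.card V := by
  let H : Set V := {v ∈ P | k ≤ (hanging K P v).ncard}
  have hHP : H ⊆ P := Set.sep_subset _ _
  have heavy : H.ncard * k ≤ Nat.card V := by
    rw [← Set.ncard_univ]
    exact ncard_mul_le_ncard_of_pairwiseDisjoint H.toFinite Set.finite_univ
      ((pairwiseDisjoint_hanging hK).subset hHP) (fun _ _ => Set.subset_univ _) fun _ hv => hv.2
  have branching : (P \ H).ncard * 2 ≤ P.ncard :=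
    ncard_mul_le_ncard_of_pairwiseDisjoint (P \ H).toFinite P.toFinite
      ((pairwiseDisjoint_lowerBoundary hK).subset Set.sdiff_subset) (fun _ _ _ hx => hx.1)
      fun v hv => (hP v hv.1).resolve_left fun hk => hv.2 ⟨hv.1, hk⟩
  have split : (P \ H).ncard + H.ncard = P.ncard := Set.ncard_sdiff_add_ncard_of_subset hHP
  calc P.ncard * k ≤ 2 * H.ncard * k := Nat.mul_le_mul_right k (by omega)
    _ ≤ 2 * Nat.card V := by rw [mul_assoc]; exact Nat.mul_le_mul_left 2 heavy

end Hanging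

/-- `K` roots the forest `G`: `K a c` says that `a` is the parent of `c`. Well-foundedness means
that going from child to parent ends in a root. -/
structure IsRooting {V : Type*} (G : SimpleGraph V) (K : V → V → Prop) : Prop where
  adj_iff : ∀ a c, G.Adj a c ↔ K a c ∨ K c a
  leftUnique : Relator.LeftUnique K
  wellFounded : WellFounded K

section Acyclic

variable {V : Type*} {G : SimpleGraph V} {a b c r : V}

theorem eq_penultimate_of_adj_of_dist_lt (hG : G.IsAcyclic) {p : G.Walk r c} (hp : p.IsPath)
    (hac : G.Adj a c) (hdist : G.dist r a < G.dist r c) : a = p.penultimate := by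
  have hra : G.Reachable r a := p.reachable.trans hac.symm.reachable
  obtain ⟨q, hq⟩ := hra.exists_walk_length_eq_dist
  have hlength : (q.concat hac).length = G.dist r c := by
    have := hG.dist_eq_dist_add_one_of_adj_of_reachable r hac hra
    rw [SimpleGraph.Walk.length_concat]
    omega
  have hpath : (q.concat hac).IsPath := SimpleGraph.Walk.isPath_of_length_eq_dist _ hlength
  have heq : p = q.concat hac :=
    congrArg Subtype.val ((hG.subsingleton_path r c).elim ⟨p, hp⟩ ⟨_, hpath⟩)
  rw [heq, SimpleGraph.Walk.penultimate_concat]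

theorem eq_of_adj_of_dist_lt (hG : G.IsAcyclic) (hrc : G.Reachable r c)
    (hac : G.Adj a c) (hbc : G.Adj b c) (ha : G.dist r a < G.dist r c)
    (hb : G.dist r b < G.dist r c) : a = b := by
  obtain ⟨p, hp, -⟩ := hrc.exists_path_of_dist
  exact (eq_penultimate_of_adj_of_dist_lt hG hp hac ha).trans
    (eq_penultimate_of_adj_of_dist_lt hG hp hbc hb).symm

theorem exists_isRooting (hG : G.IsAcyclic) : ∃ K, IsRooting G K := by
  let root : V → V := fun v => (G.connectedComponentMk v).out
  have root_reachable (v : V) : G.Reachable (root v) v :=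
    SimpleGraph.ConnectedComponent.exact (G.connectedComponentMk v).out_eq
  have root_eq {a c : V} (hac : G.Adj a c) : root a = root c :=
    congrArg Quot.out (SimpleGraph.ConnectedComponent.sound hac.reachable)
  let depth : V → ℕ := fun v => G.dist (root v) v
  refine ⟨fun a c => G.Adj a c ∧ depth a < depth c, fun a c => ?_, ?_, ?_⟩
  · have hne (hac : G.Adj a c) : depth a ≠ depth c := by
      simpa only [depth, root_eq hac] using
        hG.dist_ne_of_adj hac (root_eq hac ▸ root_reachable a)
    have := G.adj_comm a c
    grind
  · rintro a b c ⟨hac, ha⟩ ⟨hbc, hb⟩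
    simp only [depth, root_eq hac, root_eq hbc] at ha hb
    exact eq_of_adj_of_dist_lt hG (root_reachable c) hac hbc ha hb
  · exact Subrelation.wf And.right (InvImage.wf depth Nat.lt_wfRel.wf)

end Acyclic

namespace IsRooting

variable {V : Type*} {G : SimpleGraph V} {K : V → V → Prop} {P : Set V}

theorem mem_hanging_of_reachable (h : IsRooting G K) {v w : {v | v ∉ P}}
    (hv : ∀ x, K x v → x ∈ P) (hvw : (G.induce {v | v ∉ P}).Reachable v w) :
    (w : V) ∈ hanging K P v := by
  rw [SimpleGraph.reachable_iff_reflTransGen] at hvw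
  induction hvw with
  | refl => exact self_mem_hanging
  | @tail y z _ hyz ih =>
    rcases (h.adj_iff y z).1 hyz with hchild | hparent
    · exact child_mem_hanging ih hchild z.2
    · refine (eq_or_parent_mem_hanging h.leftUnique ih hparent).resolve_left fun hyv => ?_
      exact z.2 (hv z (hyv ▸ hparent))

theorem exists_supp_subset_hanging (h : IsRooting G K)
    (c : (G.induce {v | v ∉ P}).ConnectedComponent) :
    ∃ v ∉ P, Subtype.val '' c.supp ⊆ hanging K P v := by
  obtain ⟨v, hvc, hmin⟩ :=
    (InvImage.wf Subtype.val h.wellFounded).has_min c.supp c.nonempty_supp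
  have hparent : ∀ x, K x v → x ∈ P := by
    intro x hxv
    by_contra hx
    have hadj : (G.induce {v | v ∉ P}).Adj ⟨x, hx⟩ v := (h.adj_iff x v).2 (Or.inl hxv)
    exact hmin ⟨x, hx⟩ ((c.mem_supp_congr_adj hadj).2 hvc) hxv
  refine ⟨v, v.2, ?_⟩
  rintro _ ⟨w, hw, rfl⟩
  exact h.mem_hanging_of_reachable hparent
    (SimpleGraph.ConnectedComponent.exact (hvc.trans hw.symm))

theorem mem_lowerBoundary_or_parent_of_adj (h : IsRooting G K) {v w x : V} (hv : v ∉ P)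
    (hw : w ∈ hanging K P v) (hx : x ∈ P) (hxw : G.Adj x w) :
    x ∈ lowerBoundary K P v ∨ K x v := by
  rcases (h.adj_iff x w).1 hxw with hparent | hchild
  · rcases eq_or_parent_mem_hanging h.leftUnique hw hparent with rfl | hxv
    · exact Or.inr hparent
    · rcases eq_or_notMem_of_mem_hanging hxv with rfl | hxP <;> contradiction
  · exact Or.inl ⟨hx, w, hw, hchild⟩

theorem ncard_adj_hanging_le [Finite V] (h : IsRooting G K) {v : V} (hv : v ∉ P) :
    {x | x ∈ P ∧ ∃ w ∈ hanging K P v, G.Adj x w}.ncard ≤ (lowerBoundary K P v).ncard + 1 := by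
  have hparents : {x | K x v}.ncard ≤ 1 :=
    Set.ncard_le_one_iff_subsingleton.2 fun _ ha _ hb => h.leftUnique ha hb
  calc {x | x ∈ P ∧ ∃ w ∈ hanging K P v, G.Adj x w}.ncard
      ≤ (lowerBoundary K P v ∪ {x | K x v}).ncard :=
        Set.ncard_le_ncard fun _ ⟨hx, _, hw, hxw⟩ =>
          h.mem_lowerBoundary_or_parent_of_adj hv hw hx hxw
    _ ≤ (lowerBoundary K P v).ncard + {x | K x v}.ncard := Set.ncard_union_le _ _
    _ ≤ (lowerBoundary K P v).ncard + 1 := Nat.add_le_add_left hparents _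

end IsRooting

theorem exists_separator_of_isAcyclic {V : Type*} [Finite V] {G : SimpleGraph V}
    (hG : G.IsAcyclic) (k : ℕ) :
    ∃ P : Set V, P.ncard * k ≤ 2 * Nat.card V ∧
      ∀ c : (G.induce {v | v ∉ P}).ConnectedComponent,
        c.supp.ncard < k ∧ {x | x ∈ P ∧ ∃ v ∈ c.supp, G.Adj x v}.ncard ≤ 2 := by
  obtain ⟨K, hK⟩ := exists_isRooting hG
  obtain ⟨P, hP⟩ :=
    exists_set_mem_iff_heavy_or_branching (wellFounded_swap_of_finite hK.wellFounded) k
  refine ⟨P, ncard_mul_le_of_heavy_or_branching hK.leftUnique fun v => (hP v).1, fun c => ?_⟩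
  obtain ⟨v, hv, hc⟩ := hK.exists_supp_subset_hanging c
  obtain ⟨hlight, hunbranched⟩ := not_or.1 (mt (hP v).2 hv)
  constructor
  · calc c.supp.ncard = (Subtype.val '' c.supp).ncard :=
          (Set.ncard_image_of_injective _ Subtype.val_injective).symm
      _ ≤ (hanging K P v).ncard := Set.ncard_le_ncard hc
      _ < k := not_le.1 hlight
  · calc {x | x ∈ P ∧ ∃ v ∈ c.supp, G.Adj x v}.ncard
        ≤ {x | x ∈ P ∧ ∃ w ∈ hanging K P v, G.Adj x w}.ncard :=
          Set.ncard_le_ncard fun _ ⟨hx, w, hw, hxw⟩ => ⟨hx, w, hc ⟨w, hw, rfl⟩, hxw⟩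
      _ ≤ (lowerBoundary K P v).ncard + 1 := hK.ncard_adj_hanging_le hv
      _ ≤ 2 := by omega

theorem stmt5_general {V : Type*} [Fintype V] (G : SimpleGraph V) (hG : G.IsAcyclic)
    (p : ℝ) (hp : 0 < p) :
    ∃ P : Finset V, (P.card : ℝ) ≤ 2 * p ∧
      ∀ c : (G.induce {v : V | v ∉ P}).ConnectedComponent,
        ((Set.ncard {v : {v : V | v ∉ P} |
            (G.induce {v : V | v ∉ P}).connectedComponentMk v = c} : ℝ) <
          (Fintype.card V : ℝ) / p) ∧
        Set.ncard {x : V | x ∈ P ∧ ∃ v : {v : V | v ∉ P},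
            (G.induce {v : V | v ∉ P}).connectedComponentMk v = c ∧ G.Adj x ↑v} ≤ 2 := by
  obtain ⟨P, hcard, hP⟩ := exists_separator_of_isAcyclic hG ⌈(Fintype.card V : ℝ) / p⌉₊
  lift P to Finset V using P.toFinite
  refine ⟨P, ?_, fun c => ⟨Nat.lt_ceil.1 (hP c).1, (hP c).2⟩⟩
  rcases isEmpty_or_nonempty V with hV | hV
  · simp [P.eq_empty_of_isEmpty, hp.le]
  have hn : (0 : ℝ) < Fintype.card V := by exact_mod_cast Fintype.card_pos
  rw [Set.ncard_coe_finset, Nat.card_eq_fintype_card] at hcard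
  have hmul : (P.card : ℝ) * (Fintype.card V / p) ≤ 2 * Fintype.card V :=
    calc (P.card : ℝ) * (Fintype.card V / p)
        ≤ P.card * ⌈(Fintype.card V : ℝ) / p⌉₊ := by gcongr; exact Nat.le_ceil _
      _ ≤ 2 * Fintype.card V := by exact_mod_cast hcard
  rw [← mul_div_assoc, div_le_iff₀ hp] at hmul
  exact le_of_mul_le_mul_right (by linarith) hn

/-- In a tree on `n` nodes, for any real `p > 1` there is a set `P` of at most `2p`
nodes such that every connected component of `T \ P` has fewer than `n/p` nodes and
is adjacent to at most two nodes of `P`. -/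
theorem stmt5 {V : Type*} [Fintype V] (G : SimpleGraph V) (hG : G.IsTree)
    (r : V) (p : ℝ) (hp : 1 < p) :
    ∃ P : Finset V, (P.card : ℝ) ≤ 2 * p ∧
      ∀ c : (G.induce {v : V | v ∉ P}).ConnectedComponent,
        ((Set.ncard {v : {v : V | v ∉ P} |
            (G.induce {v : V | v ∉ P}).connectedComponentMk v = c} : ℝ) <
          (Fintype.card V : ℝ) / p) ∧
        Set.ncard {x : V | x ∈ P ∧ ∃ v : {v : V | v ∉ P},
            (G.induce {v : V | v ∉ P}).connectedComponentMk v = c ∧ G.Adj x ↑v} ≤ 2 :=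
  stmt5_general G hG.isAcyclic p (one_pos.trans hp)
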